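/- In U = U_q⁺(C₂), for every integer n ≥ 1, with the convention that any term containing a negative power of a generator is read as 0 (its scalar coefficient then vanishes): b₄b₁ⁿ = q^{2n} b₁ⁿb₄ + [n]₂ b₁^{n−1}b₂; b₄b₂ⁿ = [2]₁[n]₁ q^{1−n} b₂^{n−1}b₃ + b₂ⁿb₄; b₄b₃ⁿ = q^{−2n} b₃ⁿb₄; b₄ⁿb₁ = [n]₁ q^{n−1} b₂b₄^{n−1} + q^{2n} b₁b₄ⁿ + [n−1]₁[n]₁ b₃b₄^{n−2}; b₃ⁿb₁ = −q^{1−2n}⟨1⟩[n]₂[2]₁⁻¹ b₂²b₃^{n−1} + b₁b₃ⁿ; b₃ⁿb₂ = q^{−2n} b₂b₃ⁿ; and b₂ⁿb₁ = q^{−2n} b₁b₂ⁿ. -/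

import Mathlib

noncomputable section

/-- The base field `K = ℚ(q)`, rational functions over `ℚ`. -/
abbrev K : Type := RatFunc ℚ

/-- The indeterminate `q`. -/
def q : K := RatFunc.X

/-- `⟨m⟩ = q^m − q^{−m}`. -/
def qbra (m : ℕ) : K := q ^ m - q⁻¹ ^ m

/-- `[m]₁ = ⟨m⟩/⟨1⟩`. -/
def qn1 (m : ℕ) : K := qbra m / qbra 1

/-- `[m]₂ = ⟨2m⟩/⟨2⟩`. -/
def qn2 (m : ℕ) : K := qbra (2 * m) / qbra 2

/-- Generators of the free algebra on two letters. -/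
def g (i : Fin 2) : FreeAlgebra K (Fin 2) := FreeAlgebra.ι K i

/-- The `q`-Serre relations of type `C₂`. -/
inductive SerreC2 : FreeAlgebra K (Fin 2) → FreeAlgebra K (Fin 2) → Prop
  | rel1 : SerreC2
      (g 0 ^ 3 * g 1 - qn1 3 • (g 0 ^ 2 * g 1 * g 0) + qn1 3 • (g 0 * g 1 * g 0 ^ 2)
        - g 1 * g 0 ^ 3) 0
  | rel2 : SerreC2
      (g 1 ^ 2 * g 0 - qn2 2 • (g 1 * g 0 * g 1) + g 0 * g 1 ^ 2) 0

/-- `U_q⁺(C₂)`: the free algebra on `e₁, e₂` modulo the `q`-Serre relations. -/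
abbrev UC2 : Type := RingQuot SerreC2

/-- The Chevalley generator `e₁`. -/
def e1 : UC2 := RingQuot.mkAlgHom K SerreC2 (g 0)

/-- The Chevalley generator `e₂`. -/
def e2 : UC2 := RingQuot.mkAlgHom K SerreC2 (g 1)

/-- The root vector `b₁ = e₂`. -/
def b1 : UC2 := e2

/-- The root vector `b₂ = e₁e₂ − q² e₂e₁`. -/
def b2 : UC2 := e1 * e2 - (q ^ 2) • (e2 * e1)

/-- The root vector `b₃ = [2]₁⁻¹ (e₁b₂ − b₂e₁)`. -/
def b3 : UC2 := (qn1 2)⁻¹ • (e1 * b2 - b2 * e1)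

/-- The root vector `b₄ = e₁`. -/
def b4 : UC2 := e1

theorem q_ne : q ≠ 0 := RatFunc.X_ne_zero

theorem q_pow_ne (k : ℕ) (hk : 0 < k) : q ^ k - 1 ≠ 0 := by
  intro h
  have h1 : (Polynomial.X ^ k : Polynomial ℚ) = 1 := by
    apply RatFunc.algebraMap_injective ℚ
    rw [map_pow, RatFunc.algebraMap_X, map_one]
    exact sub_eq_zero.mp h
  have h2 := congrArg Polynomial.natDegree h1
  rw [Polynomial.natDegree_X_pow, Polynomial.natDegree_one] at h2
  omega

theorem qbra1_eq : qbra 1 = (q ^ 2 - 1) / q := by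
  have := q_ne
  unfold qbra; field_simp

theorem qbra2_eq : qbra 2 = (q ^ 4 - 1) / q ^ 2 := by
  have := q_ne
  unfold qbra; field_simp

theorem qbra1_ne : qbra 1 ≠ 0 := by
  rw [qbra1_eq]; exact div_ne_zero (q_pow_ne 2 (by norm_num)) q_ne

theorem qbra2_ne : qbra 2 ≠ 0 := by
  rw [qbra2_eq]; exact div_ne_zero (q_pow_ne 4 (by norm_num)) (pow_ne_zero _ q_ne)

theorem qn1_zero : qn1 0 = 0 := by simp [qn1, qbra]

theorem qn1_one : qn1 1 = 1 := div_self qbra1_ne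

theorem qn2_one : qn2 1 = 1 := by
  unfold qn2; exact div_self qbra2_ne

theorem qn1_succ (n : ℕ) : qn1 (n + 1) = q ^ n + q⁻¹ * qn1 n := by
  have h := qbra1_ne
  have hq := q_ne
  unfold qn1
  rw [div_eq_iff h, add_mul, mul_assoc, div_mul_cancel₀ _ h]
  unfold qbra
  simp only [pow_succ, pow_zero]
  field_simp
  ring

theorem qn2_succ (n : ℕ) : qn2 (n + 1) = q ^ (2 * n) + (q ^ 2)⁻¹ * qn2 n := by
  have h := qbra2_ne
  have hq := q_ne
  unfold qn2
  rw [div_eq_iff h, add_mul, mul_assoc, div_mul_cancel₀ _ h]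
  unfold qbra
  simp only [mul_add, pow_add, inv_pow]
  field_simp
  ring

theorem qn1_two : qn1 2 = q + q⁻¹ := by
  rw [qn1_succ 1, qn1_one]; ring

theorem qn1_three : qn1 3 = q ^ 2 + 1 + (q ^ 2)⁻¹ := by
  have hq := q_ne
  rw [qn1_succ 2, qn1_two]; field_simp; ring

theorem qn2_two : qn2 2 = q ^ 2 + (q ^ 2)⁻¹ := by
  rw [qn2_succ 1, qn2_one]; ring

theorem qn1_two_ne : qn1 2 ≠ 0 := by
  have h : q ^ 4 - 1 ≠ 0 := q_pow_ne 4 (by norm_num)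
  have hq := q_ne
  rw [qn1_two]
  intro h1
  apply h
  have h2 : q ^ 2 + 1 = 0 := by
    have : q ^ 2 + 1 = q * (q + q⁻¹) := by field_simp
    rw [this, h1, mul_zero]
  linear_combination (q ^ 2 - 1) * h2

theorem serre1 : e1 ^ 3 * e2 - qn1 3 • (e1 ^ 2 * e2 * e1) + qn1 3 • (e1 * e2 * e1 ^ 2)
    - e2 * e1 ^ 3 = 0 := by
  have h := RingQuot.mkAlgHom_rel K SerreC2.rel1
  simp only [map_sub, map_add, map_mul, map_pow, map_smul, map_zero] at h
  exact h

theorem serre2 : e2 ^ 2 * e1 - qn2 2 • (e2 * e1 * e2) + e1 * e2 ^ 2 = 0 := by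
  have h := RingQuot.mkAlgHom_rel K SerreC2.rel2
  simp only [map_sub, map_add, map_mul, map_pow, map_smul, map_zero] at h
  exact h

section Generic

/-- The relations used below, for elements of an arbitrary algebra over a field. -/
structure Rels {F A : Type} [Field F] [Ring A] [Algebra F A] (q : F) (qn1 qn2 : ℕ → F)
    (e1 e2 b1 b2 b3 b4 : A) : Prop where
  q_ne : q ≠ 0
  qn1_two_ne : qn1 2 ≠ 0
  qn1_one : qn1 1 = 1
  qn2_one : qn2 1 = 1
  qn1_two : qn1 2 = q + q⁻¹
  qn1_three : qn1 3 = q ^ 2 + 1 + (q ^ 2)⁻¹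
  qn2_two : qn2 2 = q ^ 2 + (q ^ 2)⁻¹
  qn1_succ : ∀ n : ℕ, qn1 (n + 1) = q ^ n + q⁻¹ * qn1 n
  qn2_succ : ∀ n : ℕ, qn2 (n + 1) = q ^ (2 * n) + (q ^ 2)⁻¹ * qn2 n
  serre1 : e1 ^ 3 * e2 - qn1 3 • (e1 ^ 2 * e2 * e1) + qn1 3 • (e1 * e2 * e1 ^ 2)
    - e2 * e1 ^ 3 = 0
  serre2 : e2 ^ 2 * e1 - qn2 2 • (e2 * e1 * e2) + e1 * e2 ^ 2 = 0
  b1_def : b1 = e2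
  b2_def : b2 = e1 * e2 - (q ^ 2) • (e2 * e1)
  b3_def : b3 = (qn1 2)⁻¹ • (e1 * b2 - b2 * e1)
  b4_def : b4 = e1

variable {F A : Type} [Field F] [Ring A] [Algebra F A] {q : F} {qn1 qn2 : ℕ → F}
  {e1 e2 b1 b2 b3 b4 : A}

theorem Rels.R41 (D : Rels q qn1 qn2 e1 e2 b1 b2 b3 b4) : b4 * b1 = q ^ 2 • (b1 * b4) + b2 := by
  rw [D.b4_def, D.b1_def, D.b2_def]; abel

theorem Rels.R42 (D : Rels q qn1 qn2 e1 e2 b1 b2 b3 b4) : b4 * b2 = qn1 2 • b3 + b2 * b4 := by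
  rw [D.b3_def, smul_inv_smul₀ D.qn1_two_ne, D.b4_def]; abel

theorem Rels.R43 (D : Rels q qn1 qn2 e1 e2 b1 b2 b3 b4) : b4 * b3 = (q ^ 2)⁻¹ • (b3 * b4) := by
  have hq := D.q_ne
  have h := D.serre1
  rw [D.qn1_three] at h
  rw [D.b3_def, D.b4_def, mul_smul_comm, smul_mul_assoc, smul_comm]
  congr 1
  rw [D.b2_def]
  simp only [pow_succ, pow_zero, one_mul, mul_add, add_mul, mul_sub, sub_mul, smul_mul_assoc,
    mul_smul_comm, mul_assoc] at h ⊢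
  rw [← sub_eq_zero, ← h]
  match_scalars <;> field_simp <;> ring

theorem Rels.R21 (D : Rels q qn1 qn2 e1 e2 b1 b2 b3 b4) : b2 * b1 = (q ^ 2)⁻¹ • (b1 * b2) := by
  have hq := D.q_ne
  have h := D.serre2
  rw [D.qn2_two] at h
  rw [D.b2_def, D.b1_def]
  simp only [pow_succ, pow_zero, one_mul, mul_add, add_mul, mul_sub, sub_mul, smul_mul_assoc,
    mul_smul_comm, mul_assoc] at h ⊢
  rw [← sub_eq_zero, ← h]
  match_scalars <;> field_simp <;> ring

theorem Rels.R31 (D : Rels q qn1 qn2 e1 e2 b1 b2 b3 b4) : b3 * b1 = ((qn1 2)⁻¹ * ((q ^ 2)⁻¹ - 1)) • (b2 * b2) + b1 * b3 := by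
  have hq := D.q_ne
  have h2 := D.qn1_two_ne
  have hA : b4 * (b2 * b1) = qn1 2 • (b3 * b1) + q ^ 2 • (b2 * b1 * b4) + b2 * b2 := by
    rw [← mul_assoc, D.R42, add_mul, mul_assoc b2 b4, D.R41, mul_add, smul_mul_assoc, mul_smul_comm,
      mul_assoc b2 b1, add_assoc]
  have hB : b4 * (b2 * b1) = qn1 2 • (b1 * b3) + b1 * b2 * b4 + (q ^ 2)⁻¹ • (b2 * b2) := by
    rw [D.R21, mul_smul_comm, ← mul_assoc, D.R41, add_mul, smul_mul_assoc, mul_assoc b1 b4, D.R42]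
    simp only [mul_add, smul_add, mul_smul_comm, mul_assoc]
    match_scalars <;> field_simp
  rw [D.R21] at hA hB
  simp only [smul_mul_assoc] at hA
  have h : qn1 2 • (b3 * b1) = qn1 2 • (((qn1 2)⁻¹ * ((q ^ 2)⁻¹ - 1)) • (b2 * b2) + b1 * b3) := by
    have h3 := hA.symm.trans hB
    rw [smul_smul, mul_inv_cancel₀ (pow_ne_zero 2 hq), one_smul] at h3
    rw [smul_add, smul_smul, mul_inv_cancel_left₀ h2]
    linear_combination (norm := module) h3
  exact smul_right_injective _ h2 h

theorem Rels.R32 (D : Rels q qn1 qn2 e1 e2 b1 b2 b3 b4) : b3 * b2 = (q ^ 2)⁻¹ • (b2 * b3) := by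
  have hq := D.q_ne
  have h2 := D.qn1_two_ne
  have hA : b4 * (b3 * b1) = b3 * b1 * b4 + (q ^ 2)⁻¹ • (b3 * b2) := by
    rw [← mul_assoc, D.R43, smul_mul_assoc, mul_assoc b3 b4, D.R41]
    simp only [mul_add, smul_add, mul_smul_comm, mul_assoc]
    match_scalars <;> field_simp
  have hB : b4 * (b1 * b3) = b1 * b3 * b4 + b2 * b3 := by
    rw [← mul_assoc, D.R41, add_mul, smul_mul_assoc, mul_assoc b1 b4, D.R43]
    simp only [mul_smul_comm, mul_assoc]
    match_scalars <;> field_simp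
  have hC : b4 * (b2 * b2) = b2 * b2 * b4 + qn1 2 • (b3 * b2 + b2 * b3) := by
    rw [← mul_assoc, D.R42, add_mul, smul_mul_assoc, mul_assoc b2 b4, D.R42]
    simp only [mul_add, mul_smul_comm, mul_assoc]
    module
  have hc : ((qn1 2)⁻¹ * ((q ^ 2)⁻¹ - 1)) * qn1 2 = (q ^ 2)⁻¹ - 1 := by
    field_simp
  rw [D.R31, mul_add, mul_smul_comm, hB, hC] at hA
  simp only [add_mul, smul_mul_assoc, smul_add, smul_smul, hc] at hA
  linear_combination (norm := module) (-1 : F) • hA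

theorem Rels.P41 (D : Rels q qn1 qn2 e1 e2 b1 b2 b3 b4) (m : ℕ) : b4 * b1 ^ (m + 1)
    = (q ^ (2 * (m + 1))) • (b1 ^ (m + 1) * b4) + qn2 (m + 1) • (b1 ^ m * b2) := by
  have hq := D.q_ne
  induction m with
  | zero => simp [D.qn2_one, D.R41]
  | succ m ih =>
    rw [pow_succ b1 (m + 1), ← mul_assoc, ih, add_mul, smul_mul_assoc, smul_mul_assoc, mul_assoc _ b4,
      mul_assoc _ b2, D.R41, D.R21, D.qn2_succ (m + 1)]
    simp only [mul_add, mul_smul_comm, ← mul_assoc, ← pow_succ]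
    match_scalars <;> ring

theorem Rels.P42 (D : Rels q qn1 qn2 e1 e2 b1 b2 b3 b4) (m : ℕ) : b4 * b2 ^ (m + 1)
    = (qn1 2 * qn1 (m + 1) * (q ^ m)⁻¹) • (b2 ^ m * b3) + b2 ^ (m + 1) * b4 := by
  have hq := D.q_ne
  induction m with
  | zero => simp [D.qn1_one, D.R42]
  | succ m ih =>
    rw [pow_succ b2 (m + 1), ← mul_assoc, ih, add_mul, smul_mul_assoc, mul_assoc _ b4,
      mul_assoc _ b3, D.R42, D.R32, D.qn1_succ (m + 1)]
    simp only [mul_add, mul_smul_comm, ← mul_assoc, ← pow_succ]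
    match_scalars <;> field_simp <;> ring

theorem Rels.P43 (D : Rels q qn1 qn2 e1 e2 b1 b2 b3 b4) (n : ℕ) : b4 * b3 ^ n = (q ^ (2 * n))⁻¹ • (b3 ^ n * b4) := by
  have hq := D.q_ne
  induction n with
  | zero => simp
  | succ m ih =>
    rw [pow_succ b3 m, ← mul_assoc, ih, smul_mul_assoc, mul_assoc _ b4, D.R43]
    simp only [mul_smul_comm, ← mul_assoc, ← pow_succ]
    match_scalars; field_simp; ring

theorem Rels.P32 (D : Rels q qn1 qn2 e1 e2 b1 b2 b3 b4) (n : ℕ) : b3 ^ n * b2 = (q ^ (2 * n))⁻¹ • (b2 * b3 ^ n) := by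
  have hq := D.q_ne
  induction n with
  | zero => simp
  | succ m ih =>
    rw [pow_succ' b3 m, mul_assoc, ih, mul_smul_comm, ← mul_assoc, D.R32]
    simp only [smul_mul_assoc, mul_assoc]
    match_scalars; field_simp; ring

theorem Rels.P21 (D : Rels q qn1 qn2 e1 e2 b1 b2 b3 b4) (n : ℕ) : b2 ^ n * b1 = (q ^ (2 * n))⁻¹ • (b1 * b2 ^ n) := by
  have hq := D.q_ne
  induction n with
  | zero => simp
  | succ m ih =>
    rw [pow_succ' b2 m, mul_assoc, ih, mul_smul_comm, ← mul_assoc, D.R21]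
    simp only [smul_mul_assoc, mul_assoc]
    match_scalars; field_simp; ring

theorem Rels.P31 (D : Rels q qn1 qn2 e1 e2 b1 b2 b3 b4) (m : ℕ) : b3 ^ (m + 1) * b1
    = (((qn1 2)⁻¹ * ((q ^ 2)⁻¹ - 1)) * (q ^ (2 * m))⁻¹ * qn2 (m + 1)) • (b2 ^ 2 * b3 ^ m) + b1 * b3 ^ (m + 1) := by
  have hq := D.q_ne
  induction m with
  | zero => simp [D.qn2_one, D.R31, pow_two]
  | succ m ih =>
    have h : b3 * b2 ^ 2 = (q ^ 4)⁻¹ • (b2 ^ 2 * b3) := by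
      rw [pow_two, ← mul_assoc, D.R32, smul_mul_assoc, mul_assoc, D.R32, mul_smul_comm, smul_smul,
        mul_assoc]
      congr 1; field_simp
    rw [pow_succ' b3 (m + 1), mul_assoc, ih, mul_add, mul_smul_comm, ← mul_assoc, ← mul_assoc, h, D.R31,
      D.qn2_succ (m + 1), ← pow_two]
    simp only [add_mul, smul_mul_assoc, mul_assoc, ← pow_succ']
    match_scalars <;> field_simp <;> ring

theorem Rels.P4n1 (D : Rels q qn1 qn2 e1 e2 b1 b2 b3 b4) (m : ℕ) : b4 ^ (m + 2) * b1
    = (qn1 (m + 2) * q ^ (m + 1)) • (b2 * b4 ^ (m + 1)) + (q ^ (2 * (m + 2))) • (b1 * b4 ^ (m + 2))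
      + (qn1 (m + 1) * qn1 (m + 2)) • (b3 * b4 ^ m) := by
  have hq := D.q_ne
  induction m with
  | zero =>
    rw [zero_add, pow_two, mul_assoc, D.R41, mul_add, mul_smul_comm, ← mul_assoc, D.R41, D.R42, D.qn1_one,
      D.qn1_two]
    simp only [add_mul, smul_mul_assoc, mul_assoc, zero_add, pow_one, pow_zero, mul_one]
    match_scalars <;> field_simp
  | succ m ih =>
    rw [pow_succ' b4 (m + 2), mul_assoc, ih, mul_add, mul_add, mul_smul_comm, mul_smul_comm,
      mul_smul_comm, ← mul_assoc, ← mul_assoc, ← mul_assoc, D.R41, D.R42, D.R43]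
    simp only [add_mul, smul_mul_assoc, mul_assoc, ← pow_succ']
    rw [show m + 1 + 2 = m + 2 + 1 by ring, show m + 1 + 1 = m + 2 by ring, D.qn1_succ (m + 2),
      D.qn1_two, D.qn1_succ (m + 1)]
    match_scalars <;> field_simp <;> ring

end Generic

theorem theRels : Rels q qn1 qn2 e1 e2 b1 b2 b3 b4 where
  q_ne := q_ne
  qn1_two_ne := qn1_two_ne
  qn1_one := qn1_one
  qn2_one := qn2_one
  qn1_two := qn1_two
  qn1_three := qn1_three
  qn2_two := qn2_two
  qn1_succ := qn1_succ
  qn2_succ := qn2_succ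
  serre1 := serre1
  serre2 := serre2
  b1_def := rfl
  b2_def := rfl
  b3_def := rfl
  b4_def := rfl

/-- power commutation relations among the root vectors of `U_q⁺(C₂)`.
(Terms with a negative power of a generator appear with vanishing coefficient, so
truncated subtraction on `ℕ` realizes the stated convention.) -/
theorem statement12 (n : ℕ) (hn : 1 ≤ n) :
    b4 * b1 ^ n = (q ^ (2 * n)) • (b1 ^ n * b4) + qn2 n • (b1 ^ (n - 1) * b2) ∧
    b4 * b2 ^ n
      = (qn1 2 * qn1 n * q ^ ((1 : ℤ) - n)) • (b2 ^ (n - 1) * b3) + b2 ^ n * b4 ∧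
    b4 * b3 ^ n = (q ^ (-(2 * n : ℤ))) • (b3 ^ n * b4) ∧
    b4 ^ n * b1
      = (qn1 n * q ^ ((n : ℤ) - 1)) • (b2 * b4 ^ (n - 1)) + (q ^ (2 * n)) • (b1 * b4 ^ n)
        + (qn1 (n - 1) * qn1 n) • (b3 * b4 ^ (n - 2)) ∧
    b3 ^ n * b1
      = (-(q ^ ((1 : ℤ) - 2 * n) * qbra 1 * qn2 n * (qn1 2)⁻¹)) • (b2 ^ 2 * b3 ^ (n - 1))
        + b1 * b3 ^ n ∧
    b3 ^ n * b2 = (q ^ (-(2 * n : ℤ))) • (b2 * b3 ^ n) ∧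
    b2 ^ n * b1 = (q ^ (-(2 * n : ℤ))) • (b1 * b2 ^ n) := by
  obtain ⟨m, rfl⟩ : ∃ m, n = m + 1 := ⟨n - 1, by omega⟩
  have hq := q_ne
  have hz : q ^ (-(2 * ((m + 1 : ℕ) : ℤ))) = (q ^ (2 * (m + 1)))⁻¹ := by
    rw [zpow_neg]; norm_cast
  rw [Nat.add_sub_cancel, hz]
  refine ⟨theRels.P41 m, ?_, theRels.P43 _, ?_, ?_, theRels.P32 _, theRels.P21 _⟩
  · rw [theRels.P42, show (1 : ℤ) - ((m + 1 : ℕ) : ℤ) = -(m : ℤ) by push_cast; ring, zpow_neg,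
      zpow_natCast]
  · rw [show ((m + 1 : ℕ) : ℤ) - 1 = (m : ℤ) by push_cast; ring, zpow_natCast]
    cases m with
    | zero => simp [qn1_one, qn1_zero, theRels.R41, add_comm]
    | succ m => exact theRels.P4n1 m
  · rw [theRels.P31, show (1 : ℤ) - 2 * ((m + 1 : ℕ) : ℤ) = -((2 * m + 1 : ℕ) : ℤ) by push_cast; ring,
      zpow_neg, zpow_natCast, qbra1_eq]
    congr 2
    have := qn1_two_ne
    field_simp
    ring
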